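/- Assume the WENO weight setup in the jump setting, and additionally assume κ := Σ_{i=l+1}^{R−1} 1/Π_{j≠i}(c_i − c_j) ≠ 0 and that at least one substencil is clean. Let i be an index whose substencil crosses the jump (i.e. i ≤ l ≤ i+r−1). Then there exist C > 0 and h₀ > 0 such that for every ε with 0 < ε ≤ 1 and every 0 < h < h₀: ω_{R,i,h} ≤ C·(h^{2s} + ε). -/

import Mathlib

/-- Simple smoothness indicator `I_{R,i,h}` on the nonuniform stencil `x_{i,h} = z + cᵢ h`,
with `r = ⌊(R-1)/2⌋`. -/
noncomputable def wenoI (R : ℕ) (c : ℕ → ℝ) (z : ℝ) (f : ℝ → ℝ) (i : ℕ) (h : ℝ) : ℝ :=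
  ∑ j ∈ Finset.Ico i (i + (R - 1) / 2),
    ((f (z + c (j + 1) * h) - f (z + c j * h)) / (c (j + 1) - c j)) ^ 2

/-- Squared undivided difference `d_{R,h}` of `f` on the full stencil. -/
noncomputable def wenoD (R : ℕ) (c : ℕ → ℝ) (z : ℝ) (f : ℝ → ℝ) (h : ℝ) : ℝ :=
  (((R - 1).factorial : ℝ) *
      ∑ i ∈ Finset.range R,
        f (z + c i * h) / ∏ j ∈ (Finset.range R).erase i, (c i - c j)) ^ 2

/-- Unnormalized WENO weight `α_{R,i,h}`, with `r' = ⌈(R-1)/2⌉ = R/2` (ℕ-division). -/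
noncomputable def wenoAlpha (R : ℕ) (c : ℕ → ℝ) (z : ℝ) (f : ℝ → ℝ) (s : ℕ) (ε : ℝ)
    (i : ℕ) (h : ℝ) : ℝ :=
  (1 / (((R / 2 : ℕ) : ℝ) + 1)) *
    (1 + (wenoD R c z f h) ^ s / ((wenoI R c z f i h) ^ s + ε))

/-- Normalized WENO weight `ω_{R,i,h}`. -/
noncomputable def wenoOmega (R : ℕ) (c : ℕ → ℝ) (z : ℝ) (f : ℝ → ℝ) (s : ℕ) (ε : ℝ)
    (i : ℕ) (h : ℝ) : ℝ :=
  wenoAlpha R c z f s ε i h / ∑ j ∈ Finset.range (R / 2 + 1), wenoAlpha R c z f s ε j h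

/-- Global average weight `ω_{R,h}`. -/
noncomputable def wenoOmegaG (R : ℕ) (c : ℕ → ℝ) (z : ℝ) (f : ℝ → ℝ) (s : ℕ) (ε : ℝ)
    (h : ℝ) : ℝ :=
  1 / (1 + (wenoD R c z f h) ^ s *
        ∑ i ∈ Finset.range (R / 2 + 1), 1 / ((wenoI R c z f i h) ^ s + ε))

/-!
With `D = d_{R,h}` and any index `k`, keeping only `α_k` in the normalizing sum gives
`ω_i ≤ α_i / α_k ≤ (D⁻ˢ + I_i⁻ˢ) (I_kˢ + ε)`. As `h → 0⁺` the nodal values converge, with error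
`O(h)`, to a step sequence taking the two one-sided limits of `f`. Hence `I_i` stays away from
zero on a crossed substencil, while `I_k = O(h²)` on a clean one. The weights
`1 / ∏_{j ≠ i} (c_i - c_j)` of the undivided difference sum to zero, so on the step sequence it
equals `κ` times the jump up to a factorial; thus `D` stays away from zero too.
-/

open Filter Topology Asymptotics

section DividedDifference

variable {ι K : Type*} [DecidableEq ι] [Field K] {s : Finset ι} {v : ι → K}

/-- The divided difference of the data `g` at the nodes `v i`, `i ∈ s`, as the symmetric sum;
`wenoD` is the square of `(R - 1)!` times it. Repeated nodes contribute zero, since `x / 0 = 0`. -/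
def dividedDifference (s : Finset ι) (v g : ι → K) : K :=
  ∑ i ∈ s, g i / ∏ j ∈ s.erase i, (v i - v j)

lemma dividedDifference_add (g g' : ι → K) :
    dividedDifference s v (fun i => g i + g' i) =
      dividedDifference s v g + dividedDifference s v g' := by
  simp only [dividedDifference, add_div, Finset.sum_add_distrib]

-- The divided difference is the top coefficient of the interpolating polynomial.
lemma dividedDifference_const (hv : Set.InjOn v s) (hs : 1 < s.card) (a : K) :
    dividedDifference s v (fun _ => a) = 0 := by
  have hdeg : (Polynomial.C a).degree < s.card :=
    Polynomial.degree_C_le.trans_lt (by exact_mod_cast zero_lt_one.trans hs)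
  have hcoeff := Lagrange.coeff_eq_sum hv hdeg
  rw [Polynomial.coeff_C_of_ne_zero (by omega)] at hcoeff
  simpa only [dividedDifference, Polynomial.eval_C] using hcoeff.symm

lemma dividedDifference_ite (hv : Set.InjOn v s) (hs : 1 < s.card) (p : ι → Prop)
    [DecidablePred p] (a b : K) :
    dividedDifference s v (fun i => if p i then a else b) =
      (b - a) * ∑ i ∈ s with ¬p i, 1 / ∏ j ∈ s.erase i, (v i - v j) := by
  have hstep : (fun i => if p i then a else b) = fun i => a + if ¬p i then b - a else 0 := by
    ext i
    by_cases hi : p i <;> simp [hi]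
  rw [hstep, dividedDifference_add, dividedDifference_const hv hs, zero_add, dividedDifference,
    Finset.mul_sum, Finset.sum_filter]
  refine Finset.sum_congr rfl fun i _ => ?_
  by_cases hi : p i <;> simp [hi, div_eq_mul_inv]

end DividedDifference

section OneSidedEstimates

lemma isBigO_sub_of_eqOn {𝕜 E F : Type*} [NontriviallyNormedField 𝕜] [NormedAddCommGroup E]
    [NormedSpace 𝕜 E] [NormedAddCommGroup F] [NormedSpace 𝕜 F] {f g : E → F} {S : Set E} {z : E}
    (hg : DifferentiableWithinAt 𝕜 g S z) (hfg : Set.EqOn f g S) :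
    (f · - g z) =O[𝓝[S] z] (· - z) :=
  hg.isBigO_sub.congr' (hfg.symm.eventuallyEq_nhdsWithin.sub EventuallyEq.rfl) EventuallyEq.rfl

lemma isBigO_comp_add_mul {E : Type*} [SeminormedAddCommGroup E] {f : ℝ → E} {S : Set ℝ}
    {z t : ℝ} {a : E} (hf : (f · - a) =O[𝓝[S] z] (· - z)) (hS : ∀ h > 0, z + t * h ∈ S) :
    (fun h => f (z + t * h) - a) =O[𝓝[>] 0] (fun h : ℝ => h) := by
  have hcont : Tendsto (fun h : ℝ => z + t * h) (𝓝 0) (𝓝 z) :=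
    Continuous.tendsto' (by fun_prop) _ _ (by simp)
  have hlim : Tendsto (fun h : ℝ => z + t * h) (𝓝[>] 0) (𝓝[S] z) :=
    tendsto_nhdsWithin_iff.2 ⟨hcont.mono_left nhdsWithin_le_nhds, eventually_mem_nhdsWithin.mono hS⟩
  have hlinear : (fun h : ℝ => z + t * h - z) =O[𝓝[>] 0] (fun h : ℝ => h) := by
    simpa only [add_sub_cancel_left] using (isBigO_refl (fun h : ℝ => h) _).const_mul_left t
  exact (hf.comp_tendsto hlim).trans hlinear

end OneSidedEstimates

section WeightInequality

variable {R : ℕ} {c : ℕ → ℝ} {z : ℝ} {f : ℝ → ℝ} {s i k : ℕ} {ε h : ℝ}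

lemma wenoI_nonneg : 0 ≤ wenoI R c z f i h :=
  Finset.sum_nonneg fun _ _ => sq_nonneg _

lemma wenoD_nonneg : 0 ≤ wenoD R c z f h :=
  sq_nonneg _

lemma wenoAlpha_pos (hε : 0 < ε) : 0 < wenoAlpha R c z f s ε i h := by
  have hI : 0 ≤ wenoI R c z f i h := wenoI_nonneg
  have hD : 0 ≤ wenoD R c z f h := wenoD_nonneg
  unfold wenoAlpha
  positivity

lemma one_add_div_add_le {D I J ε : ℝ} (hD : 0 < D) (hI : 0 < I) (hJ : 0 ≤ J) (hε : 0 < ε) :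
    1 + D / (I + ε) ≤ (D⁻¹ + I⁻¹) * (J + ε) * (1 + D / (J + ε)) := by
  have : 0 < J + ε := by positivity
  calc 1 + D / (I + ε) ≤ 1 + D / I := by gcongr; linarith
    _ = (D⁻¹ + I⁻¹) * D := by field_simp
    _ ≤ (D⁻¹ + I⁻¹) * (J + ε + D) := by gcongr; linarith
    _ = (D⁻¹ + I⁻¹) * (J + ε) * (1 + D / (J + ε)) := by field_simp

lemma wenoOmega_le (hD : 0 < wenoD R c z f h) (hI : 0 < wenoI R c z f i h) (hk : k ≤ R / 2)
    (hε : 0 < ε) :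
    wenoOmega R c z f s ε i h ≤
      ((wenoD R c z f h ^ s)⁻¹ + (wenoI R c z f i h ^ s)⁻¹) * (wenoI R c z f k h ^ s + ε) := by
  set K := ((wenoD R c z f h ^ s)⁻¹ + (wenoI R c z f i h ^ s)⁻¹) * (wenoI R c z f k h ^ s + ε)
  have hJ : 0 ≤ wenoI R c z f k h ^ s := pow_nonneg wenoI_nonneg s
  have hK : 0 ≤ K := by positivity
  have hterm : wenoAlpha R c z f s ε k h ≤
      ∑ j ∈ Finset.range (R / 2 + 1), wenoAlpha R c z f s ε j h :=
    Finset.single_le_sum (f := (wenoAlpha R c z f s ε · h)) (fun _ _ => (wenoAlpha_pos hε).le)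
      (Finset.mem_range.2 (Nat.lt_succ_of_le hk))
  have hratio : wenoAlpha R c z f s ε i h ≤ K * wenoAlpha R c z f s ε k h := by
    unfold wenoAlpha
    rw [mul_left_comm]
    gcongr
    exact one_add_div_add_le (pow_pos hD s) (pow_pos hI s) hJ hε
  exact (div_le_iff₀ ((wenoAlpha_pos hε).trans_le hterm)).2
    (hratio.trans (mul_le_mul_of_nonneg_left hterm hK))

end WeightInequality

/-- The values of `f` at the first `R` nodes `z + c j * h` converge to `g j` at first order as
`h → 0⁺`. For smooth `f` the trace `g` is constant; a jump of `f` at `z` becomes a step of `g`. -/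
def HasNodalTrace (R : ℕ) (c : ℕ → ℝ) (z : ℝ) (f : ℝ → ℝ) (g : ℕ → ℝ) : Prop :=
  ∀ j < R, (fun h => f (z + c j * h) - g j) =O[𝓝[>] 0] (fun h : ℝ => h)

namespace HasNodalTrace

variable {R : ℕ} {c : ℕ → ℝ} {z : ℝ} {f : ℝ → ℝ} {g : ℕ → ℝ} {i j k : ℕ}

lemma tendsto (hg : HasNodalTrace R c z f g) (hj : j < R) :
    Tendsto (fun h => f (z + c j * h)) (𝓝[>] 0) (𝓝 (g j)) :=
  tendsto_sub_nhds_zero_iff.1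
    ((hg j hj).trans_tendsto (tendsto_id.mono_left nhdsWithin_le_nhds))

lemma exists_pos_le_wenoD (hg : HasNodalTrace R c z f g)
    (hd : dividedDifference (Finset.range R) c g ≠ 0) :
    ∃ m > 0, ∀ᶠ h in 𝓝[>] 0, m ≤ wenoD R c z f h := by
  have hlim : Tendsto (wenoD R c z f) (𝓝[>] 0)
      (𝓝 ((((R - 1).factorial : ℝ) * dividedDifference (Finset.range R) c g) ^ 2)) :=
    ((tendsto_finsetSum _ fun j hj =>
      (hg.tendsto (Finset.mem_range.1 hj)).div_const _).const_mul _).pow 2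
  have hpos : 0 < (((R - 1).factorial : ℝ) * dividedDifference (Finset.range R) c g) ^ 2 := by
    positivity
  exact ⟨_, half_pos hpos, hlim.eventually_const_le (half_lt_self hpos)⟩

lemma exists_pos_le_wenoI (hg : HasNodalTrace R c z f g) (hi : i ≤ R / 2)
    (hj : j ∈ Finset.Ico i (i + (R - 1) / 2)) (hc : c (j + 1) ≠ c j) (hgj : g (j + 1) ≠ g j) :
    ∃ m > 0, ∀ᶠ h in 𝓝[>] 0, m ≤ wenoI R c z f i h := by
  have hjR : j + 1 < R := by
    rw [Finset.mem_Ico] at hj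
    omega
  have hlim : Tendsto
      (fun h => ((f (z + c (j + 1) * h) - f (z + c j * h)) / (c (j + 1) - c j)) ^ 2)
      (𝓝[>] 0) (𝓝 (((g (j + 1) - g j) / (c (j + 1) - c j)) ^ 2)) :=
    (((hg.tendsto hjR).sub (hg.tendsto (Nat.lt_of_succ_lt hjR))).div_const _).pow 2
  have hpos : 0 < ((g (j + 1) - g j) / (c (j + 1) - c j)) ^ 2 :=
    sq_pos_of_ne_zero (div_ne_zero (sub_ne_zero.2 hgj) (sub_ne_zero.2 hc))
  refine ⟨_, half_pos hpos, (hlim.eventually_const_le (half_lt_self hpos)).mono fun h hh => ?_⟩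
  exact hh.trans (Finset.single_le_sum
    (f := fun j => ((f (z + c (j + 1) * h) - f (z + c j * h)) / (c (j + 1) - c j)) ^ 2)
    (fun _ _ => sq_nonneg _) hj)

lemma isBigO_wenoI (hg : HasNodalTrace R c z f g) (hk : k ≤ R / 2)
    (hconst : ∀ j ∈ Finset.Ico k (k + (R - 1) / 2), g (j + 1) = g j) :
    wenoI R c z f k =O[𝓝[>] 0] (fun h => h ^ 2) := by
  refine IsBigO.fun_sum fun j hj => IsBigO.pow ?_ 2
  have hjR : j + 1 < R := by
    rw [Finset.mem_Ico] at hj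
    omega
  have hincrement := (hg (j + 1) hjR).sub (hg j (Nat.lt_of_succ_lt hjR))
  simp only [hconst j hj, sub_sub_sub_cancel_right] at hincrement
  simpa only [div_eq_inv_mul] using hincrement.const_mul_left (c (j + 1) - c j)⁻¹

lemma exists_wenoOmega_le (hg : HasNodalTrace R c z f g)
    (hd : dividedDifference (Finset.range R) c g ≠ 0) (hk : k ≤ R / 2)
    (hconst : ∀ j ∈ Finset.Ico k (k + (R - 1) / 2), g (j + 1) = g j) (hi : i ≤ R / 2)
    (hj : j ∈ Finset.Ico i (i + (R - 1) / 2)) (hc : c (j + 1) ≠ c j) (hgj : g (j + 1) ≠ g j)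
    (s : ℕ) :
    ∃ C > 0, ∀ᶠ h in 𝓝[>] 0, ∀ ε > 0,
      wenoOmega R c z f s ε i h ≤ C * (h ^ (2 * s) + ε) := by
  obtain ⟨d, hd_pos, hdD⟩ := hg.exists_pos_le_wenoD hd
  obtain ⟨m, hm_pos, hmI⟩ := hg.exists_pos_le_wenoI hi hj hc hgj
  obtain ⟨B, hB_pos, hIB⟩ := (hg.isBigO_wenoI hk hconst).exists_pos
  refine ⟨((d ^ s)⁻¹ + (m ^ s)⁻¹) * (B ^ s + 1), by positivity, ?_⟩
  filter_upwards [hdD, hmI, hIB.bound, eventually_mem_nhdsWithin] with h hdD hmI hIB hh ε hε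
  have hh_pos : 0 < h := hh
  have hI_pow : wenoI R c z f k h ^ s ≤ B ^ s * h ^ (2 * s) := by
    rw [pow_mul, ← mul_pow]
    refine pow_le_pow_left₀ wenoI_nonneg ?_ s
    simpa only [Real.norm_of_nonneg wenoI_nonneg, Real.norm_of_nonneg (sq_nonneg h)] using hIB
  have hI_add : wenoI R c z f k h ^ s + ε ≤ (B ^ s + 1) * (h ^ (2 * s) + ε) := by
    have : 0 ≤ B ^ s * ε + h ^ (2 * s) := by positivity
    linarith
  have hIk : 0 ≤ wenoI R c z f k h := wenoI_nonneg
  calc wenoOmega R c z f s ε i h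
      ≤ ((wenoD R c z f h ^ s)⁻¹ + (wenoI R c z f i h ^ s)⁻¹) * (wenoI R c z f k h ^ s + ε) :=
        wenoOmega_le (hd_pos.trans_le hdD) (hm_pos.trans_le hmI) hk hε
    _ ≤ ((d ^ s)⁻¹ + (m ^ s)⁻¹) * ((B ^ s + 1) * (h ^ (2 * s) + ε)) := by gcongr
    _ = ((d ^ s)⁻¹ + (m ^ s)⁻¹) * (B ^ s + 1) * (h ^ (2 * s) + ε) := by ring

end HasNodalTrace

section Jump

variable {R : ℕ} {c : ℕ → ℝ} {z a b : ℝ} {f : ℝ → ℝ} {l i k : ℕ}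

lemma hasNodalTrace_ite (hneg : ∀ j ≤ l, c j < 0) (hnonneg : ∀ j < R, l < j → 0 ≤ c j)
    (ha : (f · - a) =O[𝓝[<] z] (· - z)) (hb : (f · - b) =O[𝓝[≥] z] (· - z)) :
    HasNodalTrace R c z f (fun j => if j ≤ l then a else b) := by
  intro j hj
  rcases le_or_gt j l with hjl | hlj
  · simp only [if_pos hjl]
    exact isBigO_comp_add_mul ha fun h hh =>
      add_lt_of_neg_right z (mul_neg_of_neg_of_pos (hneg j hjl) hh)
  · simp only [if_neg hlj.not_ge]
    exact isBigO_comp_add_mul hb fun h hh =>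
      le_add_of_nonneg_right (mul_nonneg (hnonneg j hj hlj) (le_of_lt hh))

theorem stmt_9_general (hc : Set.InjOn c (Finset.range R)) (hneg : ∀ j ≤ l, c j < 0)
    (hnonneg : ∀ j < R, l < j → 0 ≤ c j) (ha : (f · - a) =O[𝓝[<] z] (· - z))
    (hb : (f · - b) =O[𝓝[≥] z] (· - z)) (hab : a ≠ b)
    (hκ : ∑ i ∈ Finset.Ico (l + 1) R, 1 / ∏ j ∈ (Finset.range R).erase i, (c i - c j) ≠ 0)
    (hk : k ≤ R / 2) (hclean : l ∉ Finset.Ico k (k + (R - 1) / 2))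
    (hi : i ≤ R / 2) (hcross : l ∈ Finset.Ico i (i + (R - 1) / 2)) (s : ℕ) :
    ∃ C > (0 : ℝ), ∃ h₀ > (0 : ℝ), ∀ ε : ℝ, 0 < ε → ∀ h : ℝ, 0 < h → h < h₀ →
      wenoOmega R c z f s ε i h ≤ C * (h ^ (2 * s) + ε) := by
  have hlR : l + 1 < R := by
    rw [Finset.mem_Ico] at hcross
    omega
  have hd : dividedDifference (Finset.range R) c (fun j => if j ≤ l then a else b) ≠ 0 := by
    have hIco : {j ∈ Finset.range R | ¬j ≤ l} = Finset.Ico (l + 1) R := by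
      ext j
      simp only [Finset.mem_filter, Finset.mem_range, Finset.mem_Ico]
      omega
    rw [dividedDifference_ite hc (by rw [Finset.card_range]; omega), hIco]
    exact mul_ne_zero (sub_ne_zero.2 hab.symm) hκ
  have hconst : ∀ j ∈ Finset.Ico k (k + (R - 1) / 2),
      (if j + 1 ≤ l then a else b) = if j ≤ l then a else b := fun j hj => by
    have hjl : j ≠ l := fun h => hclean (h ▸ hj)
    exact if_congr (by omega) rfl rfl
  have hcl : c (l + 1) ≠ c l := ((hneg l le_rfl).trans_le (hnonneg _ hlR l.lt_succ_self)).ne'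
  obtain ⟨C, hC, hω⟩ := (hasNodalTrace_ite hneg hnonneg ha hb).exists_wenoOmega_le hd hk hconst hi
    hcross hcl (by simpa using hab.symm) s
  obtain ⟨h₀, hh₀, hsub⟩ := mem_nhdsGT_iff_exists_Ioo_subset.1 hω
  exact ⟨C, hC, h₀, hh₀, fun ε hε h hh hlt => hsub ⟨hh, hlt⟩ ε hε⟩

end Jump

/-- **Weights of crossed substencils are small at a jump.** In the jump setting, if
`κ = Σ_{i=l+1}^{R-1} 1/Π_{j≠i}(cᵢ-cⱼ) ≠ 0`, at least one substencil is clean, and the `i`-th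
substencil crosses the jump, then `ω_{R,i,h} ≤ C (h^{2s} + ε)` for small `h` and `0 < ε ≤ 1`. -/
theorem stmt_9 (R : ℕ) (hR : 3 ≤ R) (c : ℕ → ℝ)
    (hc : ∀ i j : ℕ, i < j → j < R → c i < c j)
    (z : ℝ) (fL fR f : ℝ → ℝ) (U : Set ℝ) (hU : U ∈ nhds z)
    (hfL : ContDiffOn ℝ (⊤ : ℕ∞) fL U) (hfR : ContDiffOn ℝ (⊤ : ℕ∞) fR U)
    (hjump : fL z ≠ fR z)
    (hf : ∀ x : ℝ, f x = if x < z then fL x else fR x)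
    (l : ℕ) (hl : l + 1 < R) (hcl : c l < 0) (hcl' : 0 ≤ c (l + 1))
    (hκ : ∑ i ∈ Finset.Ico (l + 1) R,
        1 / ∏ j ∈ (Finset.range R).erase i, (c i - c j) ≠ 0)
    (hclean : ∃ i ≤ R / 2, ¬(i ≤ l ∧ l ≤ i + (R - 1) / 2 - 1))
    (s : ℕ) (hs : 1 ≤ s)
    (i : ℕ) (hi : i ≤ R / 2) (hcross : i ≤ l ∧ l ≤ i + (R - 1) / 2 - 1) :
    ∃ C > (0 : ℝ), ∃ h₀ > (0 : ℝ), ∀ ε : ℝ, 0 < ε → ε ≤ 1 → ∀ h : ℝ, 0 < h → h < h₀ →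
      wenoOmega R c z f s ε i h ≤ C * (h ^ (2 * s) + ε) := by
  obtain ⟨k, hk, hclean⟩ := hclean
  have hmono : StrictMonoOn c (Set.Iio R) := fun p _ q hq hpq => hc p q hpq hq
  have hneg : ∀ j ≤ l, c j < 0 := fun j hj =>
    (hmono.monotoneOn (Set.mem_Iio.2 (by omega)) (Set.mem_Iio.2 (by omega)) hj).trans_lt hcl
  have hnonneg : ∀ j < R, l < j → 0 ≤ c j := fun j hj hlj =>
    hcl'.trans (hmono.monotoneOn hl hj hlj)
  have hleft : (f · - fL z) =O[𝓝[<] z] (· - z) :=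
    isBigO_sub_of_eqOn ((hfL.contDiffAt hU).differentiableAt (by simp)).differentiableWithinAt
      fun x hx => (hf x).trans (if_pos hx)
  have hright : (f · - fR z) =O[𝓝[≥] z] (· - z) :=
    isBigO_sub_of_eqOn ((hfR.contDiffAt hU).differentiableAt (by simp)).differentiableWithinAt
      fun x hx => (hf x).trans (if_neg (not_lt.2 hx))
  obtain ⟨C, hC, h₀, hh₀, hω⟩ := stmt_9_general (by simpa using hmono.injOn) hneg hnonneg hleft
    hright hjump hκ hk (Finset.mem_Ico.not.2 (by omega)) hi (Finset.mem_Ico.2 (by omega)) s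
  exact ⟨C, hC, h₀, hh₀, fun ε hε _ => hω ε hε⟩
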